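/- Let (Ω, 𝓕, π) be a σ-finite measure space and for i = 0, 1 let νᵢ be a finite measure with density fᵢ = dνᵢ/dπ. Assume ν₁ ≪ ν₀ and ν₁(Ω) > 0, and let β ≥ 0. Then C_β := ∫ f₀(x)^{1/(1+β)} f₁(x)^{β/(1+β)} π(dx) ∈ (0, ∞), the infimum of D_KL(μ, ν₀) + β·D_KL(μ, ν₁) over all probability measures μ ≪ π equals −(1+β) log C_β, and the infimum is attained by the probability measure μ*_β with dμ*_β/dπ = C_β⁻¹ f₀^{1/(1+β)} f₁^{β/(1+β)}. -/

import Mathlib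

open MeasureTheory
open scoped Classical ENNReal

/-- Kullback–Leibler divergence: `D_KL(μ, ν) = ∫ log(dμ/dν) dμ` if `μ ≪ ν` (and the
log-likelihood ratio is integrable), and `∞` otherwise. Valued in `EReal = (-∞, ∞]`. -/
noncomputable def klDiv {Ω : Type*} [MeasurableSpace Ω] (μ ν : Measure Ω) : EReal :=
  if μ ≪ ν ∧ Integrable (llr μ ν) μ then ((∫ x, llr μ ν x ∂μ : ℝ) : EReal) else ⊤

/-- The normalizing constant `C_β = ∫ f₀^{1/(1+β)} f₁^{β/(1+β)} dπ` of the geometric mixture. -/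
noncomputable def geomConst {Ω : Type*} [MeasurableSpace Ω] (π : Measure Ω)
    (f₀ f₁ : Ω → ℝ≥0∞) (β : ℝ) : ℝ≥0∞ :=
  ∫⁻ x, f₀ x ^ (1 / (1 + β)) * f₁ x ^ (β / (1 + β)) ∂π

/-- The geometric-mixture measure `μ*_β` with `dμ*_β/dπ = C_β⁻¹ f₀^{1/(1+β)} f₁^{β/(1+β)}`. -/
noncomputable def geomMix {Ω : Type*} [MeasurableSpace Ω] (π : Measure Ω)
    (f₀ f₁ : Ω → ℝ≥0∞) (β : ℝ) : Measure Ω :=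
  π.withDensity fun x => (geomConst π f₀ f₁ β)⁻¹ * (f₀ x ^ (1 / (1 + β)) * f₁ x ^ (β / (1 + β)))

theorem aux_ne_zero {Ω : Type*} [MeasurableSpace Ω] {π μ : Measure Ω} {f : Ω → ℝ≥0∞}
    (hf : Measurable f) (h : μ ≪ π.withDensity f) : ∀ᵐ x ∂μ, f x ≠ 0 := by
  have h1 : ∀ᵐ x ∂(π.withDensity f), f x ≠ 0 := by
    rw [ae_withDensity_iff hf]
    exact Filter.Eventually.of_forall fun x hx => hx
  exact h.ae_le h1

theorem aux_ac {Ω : Type*} [MeasurableSpace Ω] {π μ : Measure Ω} {f : Ω → ℝ≥0∞}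
    (hf : Measurable f) (hμ : μ ≪ π) (h : ∀ᵐ x ∂μ, f x ≠ 0) : μ ≪ π.withDensity f := by
  intro A hA
  rw [withDensity_apply_eq_zero hf] at hA
  have h1 := hμ hA
  have h2 : μ {x | ¬ f x ≠ 0} = 0 := h
  refine measure_mono_null ?_ (measure_union_null h1 h2)
  intro x hx
  by_cases hx0 : f x = 0
  · right; simpa using hx0
  · left; exact ⟨hx0, hx⟩

theorem aux_llr {Ω : Type*} [MeasurableSpace Ω] {π μ ν : Measure Ω} [SigmaFinite π]
    [IsFiniteMeasure μ] [IsFiniteMeasure ν] {f : Ω → ℝ≥0∞}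
    (hf : Measurable f) (hν : ν = π.withDensity f) (h : μ ≪ ν) :
    llr μ ν =ᵐ[μ] fun x => Real.log (μ.rnDeriv π x).toReal - Real.log (f x).toReal := by
  have hνπ : ν ≪ π := hν ▸ withDensity_absolutelyContinuous π f
  have hμπ : μ ≪ π := h.trans hνπ
  have h1 : μ.rnDeriv ν * ν.rnDeriv π =ᵐ[π] μ.rnDeriv π := Measure.rnDeriv_mul_rnDeriv h
  have h2 : ν.rnDeriv π =ᵐ[π] f := by rw [hν]; exact Measure.rnDeriv_withDensity π hf
  have h3 : ∀ᵐ x ∂π, ν.rnDeriv π x < ⊤ := Measure.rnDeriv_lt_top ν π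
  have h4 : ∀ᵐ x ∂μ, f x ≠ 0 := aux_ne_zero hf (hν ▸ h)
  have h5 : ∀ᵐ x ∂μ, 0 < μ.rnDeriv ν x := Measure.rnDeriv_pos h
  have h6 : ∀ᵐ x ∂ν, μ.rnDeriv ν x < ⊤ := Measure.rnDeriv_lt_top μ ν
  filter_upwards [hμπ.ae_le h1, hμπ.ae_le h2, hμπ.ae_le h3, h4, h5, h.ae_le h6]
    with x h1 h2 h3 h4 h5 h6
  rw [← h1, Pi.mul_apply, h2, ENNReal.toReal_mul, Real.log_mul, llr]
  · ring
  · exact (ENNReal.toReal_pos h5.ne' h6.ne).ne'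
  · exact (ENNReal.toReal_pos h4 (h2 ▸ h3).ne).ne'

theorem aux_real {a b s t : ℝ} (ha : 0 < a) (hb : 0 < b) (hs : 0 < s) (ht : 0 < t)
    (hst : s + t = 1) : a ^ s * b ^ t * |Real.log b - Real.log a| ≤ a / t + b / s := by
  have key : ∀ {a b s t : ℝ}, 0 < a → 0 < b → 0 < s → 0 < t → s + t = 1 →
      a ^ s * b ^ t * (Real.log b - Real.log a) ≤ b / s := by
    intro a b s t ha hb hs ht hst
    rw [← Real.log_div hb.ne' ha.ne']
    calc a ^ s * b ^ t * Real.log (b / a) ≤ a ^ s * b ^ t * ((b / a) ^ s / s) := by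
          gcongr
          exact Real.log_le_rpow_div (by positivity) hs
      _ = b ^ (s + t) / s := by
          rw [Real.div_rpow hb.le ha.le, Real.rpow_add hb]
          have : a ^ s ≠ 0 := by positivity
          field_simp
      _ = b / s := by rw [hst, Real.rpow_one]
  have k1 := key ha hb hs ht hst
  have k2 := key hb ha ht hs (by linarith)
  have : 0 ≤ a / t := by positivity
  have : 0 ≤ b / s := by positivity
  rcases abs_cases (Real.log b - Real.log a) with ⟨h, _⟩ | ⟨h, _⟩ <;> rw [h] <;> nlinarith

theorem aux_enn {a b : ℝ≥0∞} {s t : ℝ} (ha : a ≠ ⊤) (hb : b ≠ ⊤) (hs : 0 < s) (ht : 0 < t)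
    (hst : s + t = 1) : a ^ s * b ^ t * ‖Real.log b.toReal - Real.log a.toReal‖ₑ
      ≤ ENNReal.ofReal t⁻¹ * a + ENNReal.ofReal s⁻¹ * b := by
  by_cases ha0 : a = 0
  · simp [ha0, hs]
  by_cases hb0 : b = 0
  · simp [hb0, ht]
  have ha' := ENNReal.toReal_pos ha0 ha
  have hb' := ENNReal.toReal_pos hb0 hb
  have := ENNReal.ofReal_le_ofReal (aux_real ha' hb' hs ht hst)
  rw [ENNReal.ofReal_mul (by positivity), ENNReal.ofReal_mul (by positivity),
    ← ENNReal.ofReal_rpow_of_pos ha', ← ENNReal.ofReal_rpow_of_pos hb',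
    ENNReal.ofReal_toReal ha, ENNReal.ofReal_toReal hb,
    ENNReal.ofReal_add (by positivity) (by positivity), div_eq_inv_mul, div_eq_inv_mul,
    ENNReal.ofReal_mul (by positivity), ENNReal.ofReal_mul (by positivity),
    ENNReal.ofReal_toReal ha, ENNReal.ofReal_toReal hb] at this
  rwa [Real.enorm_eq_ofReal_abs]

theorem klDiv_ne_bot {Ω : Type*} [MeasurableSpace Ω] (μ ν : Measure Ω) : klDiv μ ν ≠ ⊥ := by
  unfold klDiv
  split_ifs
  · exact EReal.coe_ne_bot _
  · simp

theorem stmt2_aux {Ω : Type*} [MeasurableSpace Ω] (π ν₀ ν₁ : Measure Ω) [SigmaFinite π]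
    [IsFiniteMeasure ν₀] [IsFiniteMeasure ν₁]
    (f₀ f₁ : Ω → ℝ≥0∞) (hf₀ : Measurable f₀) (hf₁ : Measurable f₁)
    (hν₀ : ν₀ = π.withDensity f₀) (hν₁ : ν₁ = π.withDensity f₁)
    (h01 : ν₁ ≪ ν₀) (hν₁0 : ν₁ Set.univ ≠ 0)
    (β : ℝ) (hβ : 0 ≤ β) (hb : 0 < β ∨ f₀ = f₁) :
    0 < geomConst π f₀ f₁ β ∧ geomConst π f₀ f₁ β < ⊤ ∧
    IsLeast {r : EReal | ∃ μ : Measure Ω, IsProbabilityMeasure μ ∧ μ ≪ π ∧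
        klDiv μ ν₀ + (β : EReal) * klDiv μ ν₁ = r}
      ((-(1 + β) * Real.log (geomConst π f₀ f₁ β).toReal : ℝ) : EReal) ∧
    IsProbabilityMeasure (geomMix π f₀ f₁ β) ∧ geomMix π f₀ f₁ β ≪ π ∧
    klDiv (geomMix π f₀ f₁ β) ν₀ + (β : EReal) * klDiv (geomMix π f₀ f₁ β) ν₁
      = ((-(1 + β) * Real.log (geomConst π f₀ f₁ β).toReal : ℝ) : EReal) := by
  have hs : 0 < 1 / (1 + β) := by positivity
  have ht : 0 ≤ β / (1 + β) := by positivity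
  have hst : 1 / (1 + β) + β / (1 + β) = 1 := by field_simp
  have hsβ : (1 + β) * (1 / (1 + β)) = 1 := by field_simp
  have htβ : (1 + β) * (β / (1 + β)) = β := by field_simp
  have ht' : 0 < β → 0 < β / (1 + β) := fun h => by positivity
  have hmix : geomMix π f₀ f₁ β = π.withDensity fun x => (geomConst π f₀ f₁ β)⁻¹ *
    (f₀ x ^ (1 / (1 + β)) * f₁ x ^ (β / (1 + β))) := rfl
  have hC : geomConst π f₀ f₁ β = ∫⁻ x, f₀ x ^ (1 / (1 + β)) * f₁ x ^ (β / (1 + β)) ∂π := rfl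
  generalize hCe : geomConst π f₀ f₁ β = C at *
  generalize hMe : geomMix π f₀ f₁ β = M at *
  generalize 1 / (1 + β) = s at *
  generalize β / (1 + β) = t at *
  have hν₀π : ν₀ ≪ π := hν₀ ▸ withDensity_absolutelyContinuous π f₀
  have hν₁π : ν₁ ≪ π := hν₁ ▸ withDensity_absolutelyContinuous π f₁
  have hI₀ : ∫⁻ x, f₀ x ∂π ≠ ⊤ := by
    have := measure_ne_top ν₀ Set.univ
    rwa [hν₀, withDensity_apply _ MeasurableSet.univ, Measure.restrict_univ] at this
  have hI₁ : ∫⁻ x, f₁ x ∂π ≠ ⊤ := by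
    have := measure_ne_top ν₁ Set.univ
    rwa [hν₁, withDensity_apply _ MeasurableSet.univ, Measure.restrict_univ] at this
  have ht₀ : ∀ᵐ x ∂π, f₀ x < ⊤ := ae_lt_top hf₀ hI₀
  have ht₁ : ∀ᵐ x ∂π, f₁ x < ⊤ := ae_lt_top hf₁ hI₁
  have hpm : Measurable fun x => f₀ x ^ s * f₁ x ^ t := by fun_prop
  have hprod : ∀ x, f₀ x ≠ 0 → f₁ x ≠ 0 → f₀ x ^ s * f₁ x ^ t ≠ 0 := by
    intro x h0 h1
    simp [ENNReal.rpow_eq_zero_iff, h0, h1, hs.le.not_gt, ht.not_gt]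
  have hprod' : ∀ x, f₀ x ^ s * f₁ x ^ t ≠ 0 → f₀ x ≠ 0 ∧ f₁ x ≠ 0 := by
    intro x h
    have h0 : f₀ x ≠ 0 := by
      intro h0; simp [h0, hs] at h
    refine ⟨h0, ?_⟩
    rcases hb with hb | hb
    · intro h1; simp [h1, ht' hb] at h
    · rwa [← hb]
  have hC0 : C ≠ 0 := by
    intro h
    rw [hC, lintegral_eq_zero_iff hpm] at h
    have h1 := hν₁π.ae_le h
    have h2 : ∀ᵐ x ∂ν₁, f₀ x ≠ 0 := aux_ne_zero hf₀ (hν₀ ▸ h01)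
    have h3 : ∀ᵐ x ∂ν₁, f₁ x ≠ 0 := aux_ne_zero hf₁ hν₁.absolutelyContinuous
    have h4 : ∀ᵐ x ∂ν₁, False := by
      filter_upwards [h1, h2, h3] with x h1 h2 h3
      exact hprod x h2 h3 h1
    apply hν₁0
    simpa [ae_iff] using h4
  have hCt : C ≠ ⊤ := by
    rw [hC]
    refine ne_top_of_le_ne_top (ENNReal.add_ne_top.2 ⟨hI₀, hI₁⟩) ?_
    rw [← lintegral_add_left hf₀]
    refine lintegral_mono fun x => ?_
    calc f₀ x ^ s * f₁ x ^ t ≤ (f₀ x + f₁ x) ^ s * (f₀ x + f₁ x) ^ t := by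
          gcongr
          · exact le_self_add
          · exact le_add_self
      _ = f₀ x + f₁ x := by
          rw [← ENNReal.rpow_add_of_nonneg _ _ hs.le ht, hst, ENNReal.rpow_one]
  have hCr : 0 < C.toReal := ENNReal.toReal_pos hC0 hCt
  have hhm : Measurable fun x => C⁻¹ * (f₀ x ^ s * f₁ x ^ t) := by fun_prop
  have hMπ : M ≪ π := hmix ▸ withDensity_absolutelyContinuous π _
  have hMp : IsProbabilityMeasure M := by
    constructor
    rw [hmix, withDensity_apply _ MeasurableSet.univ, Measure.restrict_univ,
      lintegral_const_mul _ hpm, ← hC, ENNReal.inv_mul_cancel hC0 hCt]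
  have hlog : ∀ x, f₀ x ≠ 0 → f₁ x ≠ 0 → f₀ x < ⊤ → f₁ x < ⊤ →
      Real.log (C⁻¹ * (f₀ x ^ s * f₁ x ^ t)).toReal =
        - Real.log C.toReal + s * Real.log (f₀ x).toReal + t * Real.log (f₁ x).toReal := by
    intro x h0 h1 h2 h3
    have a0 := ENNReal.toReal_pos h0 h2.ne
    have a1 := ENNReal.toReal_pos h1 h3.ne
    rw [ENNReal.toReal_mul, ENNReal.toReal_mul, ENNReal.toReal_inv, ← ENNReal.toReal_rpow,
      ← ENNReal.toReal_rpow, Real.log_mul (by positivity) (by positivity),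
      Real.log_mul (by positivity) (by positivity), Real.log_inv, Real.log_rpow a0,
      Real.log_rpow a1]
    ring
  -- lower bound
  have lower : ∀ μ : Measure Ω, IsProbabilityMeasure μ → μ ≪ ν₀ → μ ≪ ν₁ →
      Integrable (llr μ ν₀) μ → Integrable (llr μ ν₁) μ →
      -(1 + β) * Real.log C.toReal ≤ ∫ x, llr μ ν₀ x ∂μ + β * ∫ x, llr μ ν₁ x ∂μ := by
    intro μ hμ h0 h1 i0 i1
    have hμπ := h0.trans hν₀π
    have n0 : ∀ᵐ x ∂μ, f₀ x ≠ 0 := aux_ne_zero hf₀ (hν₀ ▸ h0)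
    have n1 : ∀ᵐ x ∂μ, f₁ x ≠ 0 := aux_ne_zero hf₁ (hν₁ ▸ h1)
    have hM : μ ≪ M := by
      rw [hmix]
      refine aux_ac hhm hμπ ?_
      filter_upwards [n0, n1] with x n0 n1
      exact mul_ne_zero (ENNReal.inv_ne_zero.2 hCt) (hprod x n0 n1)
    have e : llr μ M =ᵐ[μ] fun x => s * llr μ ν₀ x + t * llr μ ν₁ x + Real.log C.toReal := by
      filter_upwards [aux_llr hhm hmix hM, aux_llr hf₀ hν₀ h0, aux_llr hf₁ hν₁ h1, n0, n1,
        hμπ.ae_le ht₀, hμπ.ae_le ht₁] with x a b c d e f g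
      rw [a, b, c, hlog x d e f g]
      linear_combination (-Real.log (μ.rnDeriv π x).toReal) * hst
    have j0 : Integrable (fun x => s * llr μ ν₀ x) μ := i0.const_mul s
    have j1 : Integrable (fun x => t * llr μ ν₁ x) μ := i1.const_mul t
    have j2 : Integrable (fun x => s * llr μ ν₀ x + t * llr μ ν₁ x) μ := j0.add j1
    have iM : Integrable (llr μ M) μ :=
      (j2.add (integrable_const (Real.log C.toReal))).congr e.symm
    have nn := InformationTheory.integral_llr_add_sub_measure_univ_nonneg hM iM
    simp only [probReal_univ] at nn
    rw [integral_congr_ae e, integral_add j2 (integrable_const _), integral_add j0 j1,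
      integral_const_mul, integral_const_mul] at nn
    simp at nn
    have := mul_le_mul_of_nonneg_left nn (show 0 ≤ 1 + β by linarith)
    have e2 : (1 + β) * (s * ∫ x, llr μ ν₀ x ∂μ + t * ∫ x, llr μ ν₁ x ∂μ + Real.log C.toReal)
      = ∫ x, llr μ ν₀ x ∂μ + β * ∫ x, llr μ ν₁ x ∂μ + (1 + β) * Real.log C.toReal := by
      linear_combination (∫ x, llr μ ν₀ x ∂μ) * hsβ + (∫ x, llr μ ν₁ x ∂μ) * htβ
    linarith
  -- the minimizer
  have nM : ∀ᵐ x ∂M, f₀ x ≠ 0 ∧ f₁ x ≠ 0 := by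
    filter_upwards [aux_ne_zero hhm hmix.absolutelyContinuous] with x hx
    exact hprod' x (right_ne_zero_of_mul hx)
  have hM0 : M ≪ ν₀ := hν₀ ▸ aux_ac hf₀ hMπ (nM.mono fun x h => h.1)
  have hM1 : M ≪ ν₁ := hν₁ ▸ aux_ac hf₁ hMπ (nM.mono fun x h => h.2)
  have hD : M.rnDeriv π =ᵐ[π] fun x => C⁻¹ * (f₀ x ^ s * f₁ x ^ t) := by
    rw [hmix]; exact Measure.rnDeriv_withDensity π hhm
  have hlm : Measurable fun x => Real.log (f₁ x).toReal - Real.log (f₀ x).toReal := by fun_prop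
  have iL : Integrable (fun x => Real.log (f₁ x).toReal - Real.log (f₀ x).toReal) M := by
    rcases hb with hb | hb
    · refine ⟨hlm.aestronglyMeasurable, ?_⟩
      rw [HasFiniteIntegral, hmix, lintegral_withDensity_eq_lintegral_mul _ hhm (by fun_prop)]
      simp only [Pi.mul_apply, mul_assoc C⁻¹]
      rw [lintegral_const_mul _ (by fun_prop)]
      refine ENNReal.mul_lt_top (ENNReal.inv_lt_top.2 (pos_iff_ne_zero.2 hC0)) ?_
      calc _ ≤ ∫⁻ x, ENNReal.ofReal t⁻¹ * f₀ x + ENNReal.ofReal s⁻¹ * f₁ x ∂π := by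
            refine lintegral_mono_ae ?_
            filter_upwards [ht₀, ht₁] with x h0 h1
            exact aux_enn h0.ne h1.ne hs (ht' hb) hst
        _ < ⊤ := by
            rw [lintegral_add_left (by fun_prop), lintegral_const_mul _ hf₀,
              lintegral_const_mul _ hf₁]
            exact ENNReal.add_lt_top.2 ⟨ENNReal.mul_lt_top ENNReal.ofReal_lt_top hI₀.lt_top,
              ENNReal.mul_lt_top ENNReal.ofReal_lt_top hI₁.lt_top⟩
    · simp [hb]
  have e0 : llr M ν₀ =ᵐ[M] fun x => - Real.log C.toReal +
      t * (Real.log (f₁ x).toReal - Real.log (f₀ x).toReal) := by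
    filter_upwards [aux_llr hf₀ hν₀ hM0, nM, hMπ.ae_le hD, hMπ.ae_le ht₀, hMπ.ae_le ht₁]
      with x a b c d e
    rw [a, c, hlog x b.1 b.2 d e]
    linear_combination (Real.log (f₀ x).toReal) * hst
  have e1 : llr M ν₁ =ᵐ[M] fun x => - Real.log C.toReal +
      (-s) * (Real.log (f₁ x).toReal - Real.log (f₀ x).toReal) := by
    filter_upwards [aux_llr hf₁ hν₁ hM1, nM, hMπ.ae_le hD, hMπ.ae_le ht₀, hMπ.ae_le ht₁]
      with x a b c d e
    rw [a, c, hlog x b.1 b.2 d e]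
    linear_combination (Real.log (f₁ x).toReal) * hst
  have i0 : Integrable (llr M ν₀) M :=
    ((integrable_const _).add (iL.const_mul t)).congr e0.symm
  have i1 : Integrable (llr M ν₁) M :=
    ((integrable_const _).add (iL.const_mul (-s))).congr e1.symm
  have val : klDiv M ν₀ + (β : EReal) * klDiv M ν₁
      = ((-(1 + β) * Real.log C.toReal : ℝ) : EReal) := by
    rw [klDiv, klDiv, if_pos ⟨hM0, i0⟩, if_pos ⟨hM1, i1⟩, integral_congr_ae e0,
      integral_congr_ae e1, integral_add (integrable_const _) (iL.const_mul t),
      integral_add (integrable_const _) (iL.const_mul (-s)), integral_const_mul,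
      integral_const_mul]
    norm_cast
    simp only [integral_const, probReal_univ, one_smul]
    have hts : t = β * s := by
      have : (1 + β) ≠ 0 := by positivity
      apply mul_left_cancel₀ this
      linear_combination htβ - β * hsβ
    rw [hts]
    ring
  refine ⟨pos_iff_ne_zero.2 hC0, hCt.lt_top, ⟨⟨M, hMp, hMπ, val⟩, ?_⟩, hMp, hMπ, val⟩
  rintro r ⟨μ, hμ, hμπ, rfl⟩
  by_cases c0 : μ ≪ ν₀ ∧ Integrable (llr μ ν₀) μ
  · by_cases c1 : μ ≪ ν₁ ∧ Integrable (llr μ ν₁) μ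
    · rw [klDiv, klDiv, if_pos c0, if_pos c1]
      exact_mod_cast lower μ hμ c0.1 c1.1 c0.2 c1.2
    · rcases hb with hb | hb
      · have : klDiv μ ν₁ = ⊤ := if_neg c1
        rw [this, EReal.coe_mul_top_of_pos hb, EReal.add_top_of_ne_bot (klDiv_ne_bot _ _)]
        exact le_top
      · exact absurd (by rwa [hν₁, ← hb, ← hν₀]) c1
  · have : klDiv μ ν₀ = ⊤ := if_neg c0
    rw [this, EReal.top_add_of_ne_bot]
    · exact le_top
    · rcases hβ.eq_or_lt with h | h
      · simp [← h]
      · by_cases c1 : klDiv μ ν₁ = ⊤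
        · rw [c1, EReal.coe_mul_top_of_pos h]; simp
        · lift klDiv μ ν₁ to ℝ using ⟨c1, klDiv_ne_bot _ _⟩ with y
          rw [← EReal.coe_mul]
          exact EReal.coe_ne_bot _

theorem stmt2 {Ω : Type*} [MeasurableSpace Ω] (π ν₀ ν₁ : Measure Ω) [SigmaFinite π]
    [IsFiniteMeasure ν₀] [IsFiniteMeasure ν₁]
    (f₀ f₁ : Ω → ℝ≥0∞) (hf₀ : Measurable f₀) (hf₁ : Measurable f₁)
    (hν₀ : ν₀ = π.withDensity f₀) (hν₁ : ν₁ = π.withDensity f₁)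
    (h01 : ν₁ ≪ ν₀) (hν₁0 : ν₁ Set.univ ≠ 0)
    (β : ℝ) (hβ : 0 ≤ β) :
    0 < geomConst π f₀ f₁ β ∧ geomConst π f₀ f₁ β < ⊤ ∧
    IsLeast {r : EReal | ∃ μ : Measure Ω, IsProbabilityMeasure μ ∧ μ ≪ π ∧
        klDiv μ ν₀ + (β : EReal) * klDiv μ ν₁ = r}
      ((-(1 + β) * Real.log (geomConst π f₀ f₁ β).toReal : ℝ) : EReal) ∧
    IsProbabilityMeasure (geomMix π f₀ f₁ β) ∧ geomMix π f₀ f₁ β ≪ π ∧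
    klDiv (geomMix π f₀ f₁ β) ν₀ + (β : EReal) * klDiv (geomMix π f₀ f₁ β) ν₁
      = ((-(1 + β) * Real.log (geomConst π f₀ f₁ β).toReal : ℝ) : EReal) := by
  rcases hβ.eq_or_lt with h | h
  · subst h
    have hν₀0 : ν₀ Set.univ ≠ 0 := fun h => hν₁0 (h01 h)
    have key := stmt2_aux π ν₀ ν₀ f₀ f₀ hf₀ hf₀ hν₀ hν₀ Measure.AbsolutelyContinuous.rfl hν₀0 0
      le_rfl (Or.inr rfl)
    have hc : geomConst π f₀ f₁ 0 = geomConst π f₀ f₀ 0 := by simp [geomConst]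
    have hm : geomMix π f₀ f₁ 0 = geomMix π f₀ f₀ 0 := by simp [geomMix, hc]
    rw [hc, hm]
    simpa only [EReal.coe_zero, zero_mul] using key
  · exact stmt2_aux π ν₀ ν₁ f₀ f₁ hf₀ hf₁ hν₀ hν₁ h01 hν₁0 β hβ (Or.inl h)
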